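/- Let T = M_w E M_u be bounded on L²(Σ). If T is centered and S(E(uw)·E(u)·E(w)) = X up to μ-null sets, then σ_p(M_w E M_u) = σ_jp(M_w E M_u) and σ_jp(M_w E M_u) \ {0} = {λ ∈ ℂ \ {0} : μ(A_{λ,w}) > 0}, where A_{λ,w} = {x ∈ X : E(uw)(x) = λ}. -/

import Mathlib

/-!
Only one centeredness relation is needed: `T*T` commutes with `TT*`. Since `T* = M_ū E M_w̄`
(`adjoint_ae`), both `T` and `T*` map `𝒜`-measurable multiples of `w` and `ū` to functions of the
same form, and evaluating the relation at `w ∈ L²` gives `ū E(|w|²) = w E(ūw̄)` wherever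
`E(uw) ≠ 0` (`proportional`). Then `|T f| = |T* f|` almost everywhere for every `f`, so `T` is
normal (`isStarNormal_of_proportional`), and every eigenvector of a normal operator is a joint
eigenvector.

For the nonzero eigenvalues, `w E(uf) = l f` implies `(E(uw) - l) E(uf) = 0`, so `E(uw) = l` on a
set of positive measure unless `f = 0`. Conversely, the restriction of `w` to `{E(uw) = l}` is an
eigenvector for `l`.
-/

open MeasureTheory

/-- A bounded operator `A` on a Hilbert space is *centered* if the family
`{A*ⁿ Aⁿ, Aᵏ A*ᵏ : n, k ≥ 0}` consists of mutually commuting operators. -/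
def Centered {H : Type*} [NormedAddCommGroup H] [InnerProductSpace ℂ H] [CompleteSpace H]
    (A : H →L[ℂ] H) : Prop :=
  ∀ B ∈ {B : H →L[ℂ] H | ∃ n : ℕ,
      B = (ContinuousLinearMap.adjoint A) ^ n * A ^ n ∨
      B = A ^ n * (ContinuousLinearMap.adjoint A) ^ n},
    ∀ C ∈ {C : H →L[ℂ] H | ∃ k : ℕ,
      C = (ContinuousLinearMap.adjoint A) ^ k * A ^ k ∨
      C = A ^ k * (ContinuousLinearMap.adjoint A) ^ k},
      Commute B C

/-! ### Conditional expectations of complex-valued functions -/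

section WeightedCondExp

open ComplexConjugate

variable {X : Type*} {m m0 : MeasurableSpace X} {μ : Measure X}

/-- The pull-out property for complex-valued functions, with the product given only up to
almost everywhere equality. -/
lemma condExp_pull {f g h : X → ℂ} (hf : StronglyMeasurable[m] f)
    (hh : Integrable h μ) (hg : Integrable g μ) (hfg : h =ᵐ[μ] fun x => f x * g x) :
    μ[h | m] =ᵐ[μ] fun x => f x * (μ[g | m]) x :=
  (condExp_congr_ae hfg).trans
    (condExp_bilin_of_stronglyMeasurable_left (ContinuousLinearMap.mul ℝ ℂ) hf
      ((integrable_congr hfg).1 hh) hg)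

lemma condExp_conj {f : X → ℂ} (hf : Integrable f μ) :
    μ[fun x => conj (f x) | m] =ᵐ[μ] fun x => conj ((μ[f | m]) x) :=
  ((Complex.conjCLE : ℂ →L[ℝ] ℂ).comp_condExp_comm hf).symm

/-- The conditional Cauchy-Schwarz inequality in its degenerate case: where `E(|v|²)` vanishes,
`v` itself vanishes, hence so does `E(vk)`. -/
lemma condExp_mul_eq_zero (hm : m ≤ m0) [SigmaFinite (μ.trim hm)] {v k : X → ℂ}
    (hv : Integrable (fun x => conj (v x) * v x) μ) (hvk : Integrable (fun x => v x * k x) μ) :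
    ∀ᵐ x ∂μ, (μ[fun x => conj (v x) * v x | m]) x = 0 → (μ[fun x => v x * k x | m]) x = 0 := by
  set V := μ[fun x => conj (v x) * v x | m] with hV
  set S : Set X := {x | V x = 0}
  have hS : MeasurableSet[m] S :=
    stronglyMeasurable_condExp.measurable (measurableSet_singleton (0 : ℂ))
  have h1 : ∫ x in S, conj (v x) * v x ∂μ = 0 := by
    rw [← setIntegral_condExp hm hv hS, setIntegral_congr_fun (g := fun _ => 0) (hm _ hS)]
    · simp
    · intro x hx
      exact hx
  have h2 : ∀ x, conj (v x) * v x = ((‖v x‖ ^ 2 : ℝ) : ℂ) := by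
    intro x
    rw [Complex.conj_mul']
    norm_cast
  have hv' : Integrable (fun x => ‖v x‖ ^ 2) μ := by
    simp_rw [h2] at hv
    exact hv.re
  simp_rw [h2] at h1
  rw [integral_complex_ofReal, Complex.ofReal_eq_zero,
    integral_eq_zero_iff_of_nonneg (fun x => by positivity) hv'.integrableOn] at h1
  have h3 : ∀ᵐ x ∂μ, x ∈ S → v x = 0 := by
    filter_upwards [(ae_restrict_iff' (hm _ hS)).1 h1] with x hx hxS
    simpa using hx hxS
  have h4 : S.indicator (fun x => v x * k x) =ᵐ[μ] 0 := by
    filter_upwards [h3] with x hx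
    by_cases hxS : x ∈ S
    · simp [hxS, hx hxS]
    · simp [hxS]
  have h5 := (condExp_indicator hvk hS).symm.trans (condExp_congr_ae h4)
  filter_upwards [h5] with x hx hx0
  have hxS : x ∈ S := hx0
  simpa [hxS, condExp_zero] using hx

variable {u w : X → ℂ}

lemma integrable_conj_mul (hw : MemLp w 2 μ) {f : X → ℂ} (hf : MemLp f 2 μ) :
    Integrable (fun x => conj (w x) * f x) μ :=
  MemLp.integrable_mul (p := 2) (q := 2) hw.star hf

/-! ### The adjoint of a weighted conditional type operator -/

/-- The adjoint of `M_w E M_u` is `M_ū E M_w̄`. Since `ū E(w̄ g)` is not known a priori to be square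
integrable, the identity is tested on the sets where `E(w̄ g)` is bounded. -/
lemma adjoint_ae (hm : m ≤ m0) [SigmaFinite (μ.trim hm)]
    (hu : MemLp u 2 μ) (hw : MemLp w 2 μ)
    (T : Lp ℂ 2 μ →L[ℂ] Lp ℂ 2 μ)
    (hT : ∀ f : Lp ℂ 2 μ, ⇑(T f) =ᵐ[μ] fun x => w x * (μ[fun y => u y * f y | m]) x)
    (g : Lp ℂ 2 μ) :
    ⇑(ContinuousLinearMap.adjoint T g) =ᵐ[μ]
      fun x => conj (u x) * (μ[fun y => conj (w y) * g y | m]) x := by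
  set c := μ[fun y => conj (w y) * g y | m] with hc
  set t := ContinuousLinearMap.adjoint T g with ht
  have hcm : StronglyMeasurable[m] c := stronglyMeasurable_condExp
  have hG : Integrable (fun y => conj (w y) * g y) μ := integrable_conj_mul hw (Lp.memLp g)
  have key : ∀ n : ℕ, ∀ᵐ x ∂μ, ‖c x‖ ≤ n → t x = conj (u x) * c x := by
    intro n
    set A : Set X := {x | ‖c x‖ ≤ n}
    have hA : MeasurableSet[m] A := hcm.norm.measurable measurableSet_Iic
    have hA0 := hm _ hA
    set h : X → ℂ := A.indicator fun x => conj (u x) * c x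
    have hh : MemLp h 2 μ := by
      refine MemLp.of_le_mul (c := n) hu ?_ (Filter.Eventually.of_forall fun x => ?_)
      · exact (hu.star.1.mul (hcm.mono hm).aestronglyMeasurable).indicator hA0
      · by_cases hx : x ∈ A
        · have : ‖c x‖ ≤ n := hx
          simp only [h, Set.indicator_of_mem hx, norm_mul, RCLike.norm_conj]
          rw [mul_comm]
          gcongr
        · simp only [h, Set.indicator_of_notMem hx, norm_zero]
          positivity
    set k : X → ℂ := fun x => A.indicator t x - h x with hk
    have hkm : MemLp k 2 μ := ((Lp.memLp t).indicator hA0).sub hh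
    have hkA : ∀ x, x ∉ A → k x = 0 := fun x hx => by simp [hk, h, hx]
    set K : Lp ℂ 2 μ := hkm.toLp k
    have hK : ⇑K =ᵐ[μ] k := hkm.coeFn_toLp
    have huK : Integrable (fun y => u y * K y) μ :=
      MemLp.integrable_mul (p := 2) (q := 2) hu (Lp.memLp K)
    have e1 : inner ℂ (T K) g = ∫ x, c x * conj ((μ[fun y => u y * K y | m]) x) ∂μ := by
      have hi : (fun x => inner ℂ (T K x) (g x)) =ᵐ[μ]
          fun x => conj ((μ[fun y => u y * K y | m]) x) * (conj (w x) * g x) := by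
        filter_upwards [hT K] with x hx
        rw [hx, RCLike.inner_apply, map_mul]
        ring
      rw [L2.inner_def, ← integral_condExp hm]
      refine integral_congr_ae ?_
      refine (condExp_pull (f := fun x => conj ((μ[fun y => u y * K y | m]) x))
        (Complex.continuous_conj.comp_stronglyMeasurable stronglyMeasurable_condExp)
        (L2.integrable_inner _ _) hG hi).trans ?_
      exact Filter.Eventually.of_forall fun x => mul_comm _ _
    have e2 : ∫ x, h x * conj (k x) ∂μ =
        ∫ x, c x * conj ((μ[fun y => u y * K y | m]) x) ∂μ := by
      rw [← integral_condExp hm]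
      have hint : Integrable (fun x => h x * conj (k x)) μ :=
        MemLp.integrable_mul (p := 2) (q := 2) hh hkm.star
      have huK' : Integrable (fun y => conj (u y * K y)) μ :=
        (Complex.conjCLE : ℂ →L[ℝ] ℂ).integrable_comp huK
      have := condExp_pull hcm hint huK' (by
        filter_upwards [hK] with x hx
        rw [hx]
        by_cases hxA : x ∈ A
        · simp only [h, Set.indicator_of_mem hxA, map_mul]
          ring
        · simp [hkA x hxA])
      refine integral_congr_ae (this.trans ?_)
      filter_upwards [condExp_conj (m := m) huK] with x hx
      rw [hx]
    have e3 : inner ℂ K K = (0 : ℂ) := by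
      have e4 : inner ℂ K t = ∫ x, h x * conj (k x) ∂μ := by
        rw [e2, ← e1, ht, ContinuousLinearMap.adjoint_inner_right]
      have hint : Integrable (fun x => h x * conj (k x)) μ :=
        MemLp.integrable_mul (p := 2) (q := 2) hh hkm.star
      rw [← sub_eq_zero, L2.inner_def, ← integral_sub (L2.integrable_inner _ _) hint] at e4
      rw [L2.inner_def, ← e4]
      refine integral_congr_ae ?_
      filter_upwards [hK] with x hx
      rw [RCLike.inner_apply, RCLike.inner_apply, hx]
      by_cases hxA : x ∈ A
      · simp only [hk, Set.indicator_of_mem hxA]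
        ring
      · simp [hkA x hxA]
    have hK0 : K = 0 := inner_self_eq_zero.1 e3
    have : k =ᵐ[μ] 0 := hK.symm.trans (by rw [hK0]; exact Lp.coeFn_zero _ _ _)
    filter_upwards [this] with x hx hxA
    have hxA' : x ∈ A := hxA
    simpa [hk, h, hxA', sub_eq_zero] using hx
  filter_upwards [ae_all_iff.2 key] with x hx
  obtain ⟨n, hn⟩ := exists_nat_ge ‖c x‖
  exact hx n hn

/-! ### Centeredness forces normality -/

/-- The first nontrivial centeredness relation, `T*T` commuting with `TT*`, evaluated at `w`
forces `ū E(|w|²) = w E(ūw̄)`: the weights `ū` and `w` are `𝒜`-proportional. -/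
lemma proportional (hm : m ≤ m0) [SigmaFinite (μ.trim hm)]
    (hu : MemLp u 2 μ) (hw : MemLp w 2 μ)
    (T : Lp ℂ 2 μ →L[ℂ] Lp ℂ 2 μ)
    (hT : ∀ f : Lp ℂ 2 μ, ⇑(T f) =ᵐ[μ] fun x => w x * (μ[fun y => u y * f y | m]) x)
    (hcomm : Commute (ContinuousLinearMap.adjoint T * T) (T * ContinuousLinearMap.adjoint T))
    (hsupp : ∀ᵐ x ∂μ, (μ[fun y => u y * w y | m]) x ≠ 0) :
    ∀ᵐ x ∂μ, (μ[fun y => conj (w y) * w y | m]) x ≠ 0 ∧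
      conj (u x) * (μ[fun y => conj (w y) * w y | m]) x =
        w x * conj ((μ[fun y => u y * w y | m]) x) := by
  have hS := adjoint_ae hm hu hw T hT
  set a := μ[fun y => conj (w y) * w y | m] with ha
  set b := μ[fun y => conj (u y) * u y | m] with hb
  set c := μ[fun y => u y * w y | m] with hc
  set S := ContinuousLinearMap.adjoint T
  have ham : StronglyMeasurable[m] a := stronglyMeasurable_condExp
  have hbm : StronglyMeasurable[m] b := stronglyMeasurable_condExp
  have hcm : StronglyMeasurable[m] c := stronglyMeasurable_condExp
  have hcm' : StronglyMeasurable[m] fun x => conj (c x) :=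
    Complex.continuous_conj.comp_stronglyMeasurable hcm
  have hww := integrable_conj_mul hw hw
  have huu := integrable_conj_mul hu hu
  have huw : Integrable (fun y => u y * w y) μ := MemLp.integrable_mul (p := 2) (q := 2) hu hw
  have huw' : Integrable (fun y => conj (u y * w y)) μ :=
    (Complex.conjCLE : ℂ →L[ℝ] ℂ).integrable_comp huw
  have iu (F : Lp ℂ 2 μ) : Integrable (fun y => u y * F y) μ :=
    MemLp.integrable_mul (p := 2) (q := 2) hu (Lp.memLp F)
  have iw (F : Lp ℂ 2 μ) : Integrable (fun y => conj (w y) * F y) μ :=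
    integrable_conj_mul hw (Lp.memLp F)
  -- `T` and `T*` map `w · L⁰(𝒜)` and `ū · L⁰(𝒜)` into each other, with explicit multipliers.
  have Tw {F : Lp ℂ 2 μ} {p : X → ℂ} (hp : StronglyMeasurable[m] p)
      (hF : F =ᵐ[μ] fun x => w x * p x) : T F =ᵐ[μ] fun x => w x * (p x * c x) := by
    filter_upwards [hT F, condExp_pull hp (iu F) huw (by
      filter_upwards [hF] with x hx; rw [hx]; ring)] with x h1 h2
    rw [h1, h2]
  have Tu {F : Lp ℂ 2 μ} {p : X → ℂ} (hp : StronglyMeasurable[m] p)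
      (hF : F =ᵐ[μ] fun x => conj (u x) * p x) : T F =ᵐ[μ] fun x => w x * (p x * b x) := by
    filter_upwards [hT F, condExp_pull hp (iu F) huu (by
      filter_upwards [hF] with x hx; rw [hx]; ring)] with x h1 h2
    rw [h1, h2]
  have Sw {F : Lp ℂ 2 μ} {p : X → ℂ} (hp : StronglyMeasurable[m] p)
      (hF : F =ᵐ[μ] fun x => w x * p x) : S F =ᵐ[μ] fun x => conj (u x) * (p x * a x) := by
    filter_upwards [hS F, condExp_pull hp (iw F) hww (by
      filter_upwards [hF] with x hx; rw [hx]; ring)] with x h1 h2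
    rw [h1, h2]
  have Su {F : Lp ℂ 2 μ} {p : X → ℂ} (hp : StronglyMeasurable[m] p)
      (hF : F =ᵐ[μ] fun x => conj (u x) * p x) :
      S F =ᵐ[μ] fun x => conj (u x) * (p x * conj (c x)) := by
    filter_upwards [hS F, condExp_pull hp (iw F) huw' (by
      filter_upwards [hF] with x hx; rw [hx, map_mul]; ring), condExp_conj (m := m) huw]
      with x h1 h2 h3
    rw [h1, h2, h3]
  have hW : ⇑(hw.toLp w) =ᵐ[μ] fun x => w x * 1 := by simpa using hw.coeFn_toLp
  have hone : StronglyMeasurable[m] fun _ : X => (1 : ℂ) := stronglyMeasurable_const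
  have m1 := hone.mul ham
  have m2 := m1.mul hbm
  have m3 := m2.mul hcm
  have n1 := hone.mul hcm
  have n2 := n1.mul ham
  have n3 := n2.mul hcm'
  have L := Sw m3 (Tw m2 (Tu m1 (Sw hone hW)))
  have R := Tu n3 (Su n2 (Sw n1 (Tw hone hW)))
  have hE : S (T (T (S (hw.toLp w)))) = T (S (S (T (hw.toLp w)))) :=
    congrArg (fun Q : Lp ℂ 2 μ →L[ℂ] Lp ℂ 2 μ => Q (hw.toLp w)) hcomm
  rw [hE] at L
  have za := condExp_mul_eq_zero hm hww (k := u) (by simpa only [mul_comm] using huw)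
  have zb := condExp_mul_eq_zero hm huu huw
  have hwu : (fun y => w y * u y) = fun y => u y * w y := funext fun y => mul_comm _ _
  rw [hwu] at za
  filter_upwards [L, R, za, zb, hsupp] with x hL hR hza hzb hx
  have hax : a x ≠ 0 := fun h => hx (hza h)
  have hbx : b x ≠ 0 := fun h => hx (hzb h)
  refine ⟨hax, ?_⟩
  rw [hL] at hR
  simp only [Pi.mul_apply] at hR
  refine mul_right_cancel₀ (mul_ne_zero (mul_ne_zero hax hbx) hx) ?_
  linear_combination hR

/-- If `ū E(|w|²) = w E(ūw̄)`, then `Tf` and `T*f` have the same modulus almost everywhere,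
so `T` is normal. -/
lemma isStarNormal_of_proportional (hm : m ≤ m0) [SigmaFinite (μ.trim hm)]
    (hu : MemLp u 2 μ) (hw : MemLp w 2 μ)
    (T : Lp ℂ 2 μ →L[ℂ] Lp ℂ 2 μ)
    (hT : ∀ f : Lp ℂ 2 μ, ⇑(T f) =ᵐ[μ] fun x => w x * (μ[fun y => u y * f y | m]) x)
    (hp : ∀ᵐ x ∂μ, (μ[fun y => conj (w y) * w y | m]) x ≠ 0 ∧
      conj (u x) * (μ[fun y => conj (w y) * w y | m]) x =
        w x * conj ((μ[fun y => u y * w y | m]) x)) :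
    IsStarNormal T := by
  rw [ContinuousLinearMap.isStarNormal_iff_norm_eq_adjoint]
  intro f
  have hS := adjoint_ae hm hu hw T hT f
  set a := μ[fun y => conj (w y) * w y | m] with ha
  set c := μ[fun y => u y * w y | m] with hc
  have ham : StronglyMeasurable[m] a := stronglyMeasurable_condExp
  have hcm : StronglyMeasurable[m] c := stronglyMeasurable_condExp
  have hd : StronglyMeasurable[m] fun x => c x / conj (a x) :=
    (hcm.measurable.div
      (Complex.continuous_conj.measurable.comp ham.measurable)).stronglyMeasurable
  have iu : Integrable (fun y => u y * f y) μ :=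
    MemLp.integrable_mul (p := 2) (q := 2) hu (Lp.memLp f)
  have hE := condExp_pull hd iu
    (integrable_conj_mul hw (Lp.memLp f)) (by
      filter_upwards [hp] with x hx
      have h0 : conj (a x) ≠ 0 := (map_ne_zero _).2 hx.1
      have h1 := congrArg conj hx.2
      simp only [map_mul, Complex.conj_conj] at h1
      field_simp
      linear_combination f x * h1)
  rw [Lp.norm_def, Lp.norm_def]
  congr 1
  refine eLpNorm_congr_norm_ae ?_
  filter_upwards [hT f, hS, hE, hp] with x h1 h2 h3 h4
  have h5 : ‖u x‖ * ‖a x‖ = ‖w x‖ * ‖c x‖ := by simpa using congrArg norm h4.2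
  have h6 : ‖a x‖ ≠ 0 := norm_ne_zero_iff.2 h4.1
  rw [h1, h2, h3]
  simp only [norm_mul, norm_div, RCLike.norm_conj]
  field_simp
  linear_combination (-‖(μ[fun y => conj (w y) * f y | m]) x‖) * h5

end WeightedCondExp

/-! ### The point spectrum and the joint point spectrum -/

/-- **Remark 3.4 (i).** Let `T = M_w E M_u` be bounded on `L²(Σ)`. If `T` is centered
and `S(E(uw) E(u) E(w)) = X` up to μ-null sets, then `σ_p(T) = σ_jp(T)` and
`σ_jp(T) \ {0} = {λ ∈ ℂ \ {0} : μ(A_{λ,w}) > 0}`, where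
`A_{λ,w} = {x : E(uw)(x) = λ}`. -/
theorem stmt_18 {X : Type*} [m0 : MeasurableSpace X] {μ : Measure X} [μ.IsComplete]
    [SigmaFinite μ] {m : MeasurableSpace X} (hm : m ≤ m0) [SigmaFinite (μ.trim hm)]
    (u w : X → ℂ) (hu : AEMeasurable u μ) (hw : AEMeasurable w μ)
    (hui : Integrable u μ) (hwi : Integrable w μ)
    (hu2 : Integrable (fun x => ‖u x‖ ^ 2) μ) (hw2 : Integrable (fun x => ‖w x‖ ^ 2) μ)
    (huw : Integrable (fun x => u x * w x) μ)
    (hintu : ∀ f : Lp ℂ 2 μ, Integrable (fun x => u x * f x) μ)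
    (T : Lp ℂ 2 μ →L[ℂ] Lp ℂ 2 μ)
    (hT : ∀ f : Lp ℂ 2 μ, ⇑(T f) =ᵐ[μ] fun x => w x * (μ[fun y => u y * f y | m]) x)
    (hc : Centered T)
    (hsupp : ∀ᵐ x ∂μ,
      (μ[fun y => u y * w y | m]) x * (μ[u | m]) x * (μ[w | m]) x ≠ 0) :
    {l : ℂ | ∃ f : Lp ℂ 2 μ, f ≠ 0 ∧ T f = l • f} =
      {l : ℂ | ∃ f : Lp ℂ 2 μ, f ≠ 0 ∧ T f = l • f ∧
        ContinuousLinearMap.adjoint T f = (starRingEnd ℂ) l • f} ∧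
    {l : ℂ | ∃ f : Lp ℂ 2 μ, f ≠ 0 ∧ T f = l • f ∧
        ContinuousLinearMap.adjoint T f = (starRingEnd ℂ) l • f} \ {0} =
      {l : ℂ | l ≠ 0 ∧ 0 < μ {x | (μ[fun y => u y * w y | m]) x = l}} := by
  have hu' : MemLp u 2 μ := (memLp_two_iff_integrable_sq_norm hu.aestronglyMeasurable).2 hu2
  have hw' : MemLp w 2 μ := (memLp_two_iff_integrable_sq_norm hw.aestronglyMeasurable).2 hw2
  have hc0 : ∀ᵐ x ∂μ, (μ[fun y => u y * w y | m]) x ≠ 0 := by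
    filter_upwards [hsupp] with x hx h0
    exact hx (by rw [h0]; ring)
  have hcomm : Commute (ContinuousLinearMap.adjoint T * T) (T * ContinuousLinearMap.adjoint T) :=
    hc _ ⟨1, Or.inl (by simp)⟩ _ ⟨1, Or.inr (by simp)⟩
  have hn : IsStarNormal T := isStarNormal_of_proportional hm hu' hw' T hT
    (proportional hm hu' hw' T hT hcomm hc0)
  -- Eigenvectors of a normal operator are joint eigenvectors: apply `ker S* = ker S` to `T - l`.
  have hjoint : ∀ (l : ℂ) (f : Lp ℂ 2 μ), T f = l • f →
      ContinuousLinearMap.adjoint T f = (starRingEnd ℂ) l • f := by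
    intro l f hf
    have hn' : IsStarNormal (T - l • (1 : Lp ℂ 2 μ →L[ℂ] Lp ℂ 2 μ)) := by
      refine ⟨?_⟩
      have h := hn.star_comm_self
      simp only [Commute, SemiconjBy, star_sub, star_smul, star_one, sub_mul, mul_sub,
        smul_mul_assoc, mul_smul_comm, one_mul, mul_one] at h ⊢
      rw [h, smul_sub, smul_sub, smul_comm (star l) l]
      abel
    have h0 := (ContinuousLinearMap.IsStarNormal.adjoint_apply_eq_zero_iff hn' f).2
      (by simp [hf])
    rw [map_sub, sub_apply, sub_eq_zero] at h0
    rw [h0, map_smulₛₗ]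
    simp [← ContinuousLinearMap.star_eq_adjoint]
  have hset : {l : ℂ | ∃ f : Lp ℂ 2 μ, f ≠ 0 ∧ T f = l • f} =
      {l : ℂ | ∃ f : Lp ℂ 2 μ, f ≠ 0 ∧ T f = l • f ∧
        ContinuousLinearMap.adjoint T f = (starRingEnd ℂ) l • f} := by
    ext l
    exact ⟨fun ⟨f, h0, hf⟩ => ⟨f, h0, hf, hjoint l f hf⟩, fun ⟨f, h0, hf, _⟩ => ⟨f, h0, hf⟩⟩
  refine ⟨hset, ?_⟩
  rw [← hset]
  set c := μ[fun y => u y * w y | m] with hcdef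
  ext l
  simp only [Set.mem_sdiff, Set.mem_ofPred_eq, Set.mem_singleton_iff]
  constructor
  · rintro ⟨⟨f, hf0, hf⟩, hl⟩
    refine ⟨hl, pos_iff_ne_zero.2 fun hμ => hf0 ?_⟩
    have hne : ∀ᵐ x ∂μ, c x ≠ l := by simpa [ae_iff] using hμ
    have hTf : ⇑(T f) =ᵐ[μ] fun x => l * f x := by
      rw [hf]
      exact Lp.coeFn_smul l f
    -- Multiplying `w E(uf) = l f` by `u` and conditioning gives `E(uf) E(uw) = l E(uf)`.
    have h1 := condExp_pull (m := m) (f := μ[fun y => u y * f y | m])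
      stronglyMeasurable_condExp (hintu (T f)) huw (by
        filter_upwards [hT f] with x hx
        rw [hx]
        ring)
    have h2 := condExp_pull (m := m) (f := fun _ => l) stronglyMeasurable_const
      (hintu (T f)) (hintu f) (by
        filter_upwards [hTf] with x hx
        rw [hx]
        ring)
    rw [Lp.eq_zero_iff_ae_eq_zero]
    filter_upwards [h1, h2, hne, hT f, hTf] with x e1 e2 e3 e4 e5
    have e6 : (μ[fun y => u y * f y | m]) x = 0 := by
      rw [e1] at e2
      have : (μ[fun y => u y * f y | m]) x * (c x - l) = 0 := by linear_combination e2
      exact (mul_eq_zero.1 this).resolve_right (sub_ne_zero.2 e3)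
    rw [e4, e6, mul_zero] at e5
    exact (mul_eq_zero.1 e5.symm).resolve_left hl
  · rintro ⟨hl, hμ⟩
    refine ⟨?_, hl⟩
    -- The eigenvector is `w` restricted to the set where `E(uw) = l`.
    set A : Set X := {x | c x = l}
    have hA : MeasurableSet[m] A :=
      stronglyMeasurable_condExp.measurable (measurableSet_singleton l)
    have hwA : MemLp (A.indicator w) 2 μ := hw'.indicator (hm _ hA)
    have hF : ⇑(hwA.toLp _) =ᵐ[μ] A.indicator w := hwA.coeFn_toLp
    have hE : μ[fun y => u y * (hwA.toLp _ : Lp ℂ 2 μ) y | m] =ᵐ[μ] A.indicator c := by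
      refine (condExp_congr_ae ?_).trans (condExp_indicator huw hA)
      filter_upwards [hF] with x hx
      rw [hx]
      by_cases hxA : x ∈ A <;> simp [hxA]
    refine ⟨hwA.toLp _, fun h0 => ?_, ?_⟩
    · rw [Lp.eq_zero_iff_ae_eq_zero] at h0
      have hz : μ[fun y => u y * (hwA.toLp _ : Lp ℂ 2 μ) y | m] =ᵐ[μ] 0 := by
        rw [← condExp_zero (m := m) (μ := μ)]
        refine condExp_congr_ae ?_
        filter_upwards [h0] with x hx
        simp [hx]
      refine hμ.ne' ?_
      rw [measure_eq_zero_iff_ae_notMem]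
      filter_upwards [hE, hz] with x e1 e2 hxA
      rw [e2, Set.indicator_of_mem hxA] at e1
      exact hl (by rw [← show c x = l from hxA, ← e1]; rfl)
    · refine Lp.ext ?_
      filter_upwards [hT (hwA.toLp _), Lp.coeFn_smul l (hwA.toLp _), hF, hE] with x e1 e2 e3 e4
      rw [e1, e2, Pi.smul_apply, e3, e4, smul_eq_mul]
      by_cases hxA : x ∈ A
      · rw [Set.indicator_of_mem hxA, Set.indicator_of_mem hxA, show c x = l from hxA, mul_comm]
      · simp [hxA]
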